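/- arXiv:1501.07895 — 2 statements merged into one kernel-verified Lean document; each statement's English description precedes it below -/
import Mathlib

section
/- Let W be a Delsarte polynomial in n variables with exponent matrix A invertible over ℚ, charges q with positive entries, degree d and weights w = dq, and assume gcd(w_1,…,w_n) = 1. Then an element diag(λ_1,…,λ_n) of Aut(W) satisfies λ_j = μ^{w_j} for all j for some μ ∈ ℂ^* (i.e. it acts trivially on the weighted projective space ℙ(w_1,…,w_n)) if and only if it belongs to J_W = ⟨j_W⟩; moreover J_W is cyclic of order exactly d, generated by j_W = diag(e^{2πiq_1},…,e^{2πiq_n}). -/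
open Complex BigOperators Matrix

noncomputable section

namespace BV

/-- The Delsarte polynomial function attached to an exponent matrix `A`. -/
def wfun {ι : Type*} [Fintype ι] (A : Matrix ι ι ℕ) (x : ι → ℂ) : ℂ :=
  ∑ i, ∏ j, x j ^ A i j

/-- The group `Aut(P)` of diagonal symmetries of a function `P : (ι → ℂ) → ℂ`. -/
def autP {ι : Type*} (P : (ι → ℂ) → ℂ) : Subgroup (ι → ℂˣ) where
  carrier := {lam | ∀ x : ι → ℂ, P (fun j => (lam j : ℂ) * x j) = P x}
  one_mem' := by intro x; simp
  mul_mem' := by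
    intro a b ha hb x
    have h1 := ha fun j => (b j : ℂ) * x j
    have h2 := hb x
    have h3 : (fun j => ((a * b) j : ℂ) * x j) = fun j => (a j : ℂ) * ((b j : ℂ) * x j) := by
      funext j; simp [mul_assoc]
    rw [h3, h1, h2]
  inv_mem' := by
    intro a ha x
    have h := (ha fun j => (((a j)⁻¹ : ℂˣ) : ℂ) * x j).symm
    have h2 : (fun j => (a j : ℂ) * ((((a j)⁻¹ : ℂˣ) : ℂ) * x j)) = x := by
      funext j; exact Units.mul_inv_cancel_left (a j) (x j)
    rw [h2] at h
    simpa using h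

/-- The product-of-entries homomorphism (the determinant of a diagonal matrix). -/
def prodHom (ι : Type*) [Fintype ι] : (ι → ℂˣ) →* ℂˣ where
  toFun lam := ∏ j, lam j
  map_one' := by simp
  map_mul' a b := by simp [Finset.prod_mul_distrib]

/-- The group `SL(P)` of diagonal symmetries of determinant one. -/
def slP {ι : Type*} [Fintype ι] (P : (ι → ℂ) → ℂ) : Subgroup (ι → ℂˣ) :=
  autP P ⊓ (prodHom ι).ker

/-- `exp(2 π i v)` as a unit of `ℂ`. -/
def eU (v : ℚ) : ℂˣ := Units.mk0 (Complex.exp (2 * (Real.pi : ℂ) * Complex.I * (v : ℂ)))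
  (Complex.exp_ne_zero _)

/-- The element `j_W` attached to a charge vector `q`. -/
def jW {ι : Type*} (q : ι → ℚ) : ι → ℂˣ := fun j => eU (q j)

/-- The group `J_W = ⟨j_W⟩`. -/
def JW {ι : Type*} (q : ι → ℚ) : Subgroup (ι → ℂˣ) := Subgroup.zpowers (jW q)

end BV

/-!
`W` is weighted homogeneous: `W(μ^{w_1} x_1, …, μ^{w_n} x_n) = μ^d W(x)`. For `n > 0` the value
`W(1, …, 1) = n` is nonzero, so `(μ^{w_j})_j` is a symmetry of `W` exactly when `μ^d = 1`. Writing
`μ = e^{2πik/d}`, its `j`-th entry is `e^{2πi k w_j / d} = e^{2πi k q_j}`, so these elements are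
exactly the powers of `j_W`.
-/

namespace BV

variable {ι : Type*}

theorem eU_zpow (v : ℚ) (k : ℤ) : eU v ^ k = eU (k * v) := by
  ext
  simp only [eU, Units.val_zpow_eq_zpow_val, Units.val_mk0]
  rw [← Complex.exp_int_mul]
  push_cast
  ring_nf

theorem eU_eq_one_iff {v : ℚ} : eU v = 1 ↔ ∃ k : ℤ, v = k := by
  rw [Units.ext_iff]
  simp only [eU, Units.val_mk0, Units.val_one]
  rw [Complex.exp_eq_one_iff]
  refine exists_congr fun k => ?_
  rw [mul_comm, mul_left_inj' Complex.two_pi_I_ne_zero]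
  norm_cast

theorem pow_eq_one_iff_exists_eU {d : ℕ} (hd : d ≠ 0) {μ : ℂˣ} :
    μ ^ d = 1 ↔ ∃ k : ℤ, μ = eU (k / d) := by
  constructor
  · intro hμ
    have : NeZero d := ⟨hd⟩
    obtain ⟨i, -, hi⟩ := (Complex.mem_rootsOfUnity d μ).1 ((_root_.mem_rootsOfUnity d μ).2 hμ)
    refine ⟨i, Units.ext ?_⟩
    simp [← hi, eU]
  · rintro ⟨k, rfl⟩
    rw [← zpow_natCast, eU_zpow, eU_eq_one_iff]
    exact ⟨k, by push_cast; field_simp⟩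

theorem jW_zpow (q : ι → ℚ) (k : ℤ) : jW q ^ k = jW fun j => k * q j :=
  funext fun j => eU_zpow (q j) k

theorem jW_eq_one_iff {q : ι → ℚ} : jW q = 1 ↔ ∀ j, ∃ k : ℤ, q j = k := by
  simp only [funext_iff, jW, Pi.one_apply, eU_eq_one_iff]

theorem jW_pow_eq_one_iff {q : ι → ℚ} {m : ℕ} :
    jW q ^ m = 1 ↔ ∀ j, ∃ k : ℤ, (m : ℚ) * q j = k := by
  rw [← zpow_natCast, jW_zpow, jW_eq_one_iff]
  simp only [Int.cast_natCast]

/-- `IsDegree q d` says that `d` is the degree of the charges vector `q`: the least positive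
integer with `d q` integral. -/
def IsDegree (q : ι → ℚ) (d : ℕ) : Prop :=
  IsLeast {m : ℕ | 0 < m ∧ ∀ j, ∃ k : ℤ, (m : ℚ) * q j = k} d

theorem IsDegree.orderOf_jW {q : ι → ℚ} {d : ℕ} (hd : IsDegree q d) : orderOf (jW q) = d := by
  simp only [IsDegree, ← jW_pow_eq_one_iff] at hd
  obtain ⟨⟨hpos, hpow⟩, hmin⟩ := hd
  exact (orderOf_eq_iff hpos).2 ⟨hpow, fun m hmd hm h => hmd.not_ge (hmin ⟨hm, h⟩)⟩

theorem mem_JW_iff_exists_pow_eq_one {q : ι → ℚ} {d : ℕ} (hd : d ≠ 0) {w : ι → ℤ}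
    (hw : ∀ j, (w j : ℚ) = d * q j) {lam : ι → ℂˣ} :
    lam ∈ JW q ↔ ∃ μ : ℂˣ, μ ^ d = 1 ∧ ∀ j, lam j = μ ^ w j := by
  have eU_zpow_weight (k : ℤ) (j : ι) : eU (k / d) ^ w j = (jW q ^ k) j := by
    rw [eU_zpow, jW_zpow, jW, hw j]
    field_simp
  simp only [pow_eq_one_iff_exists_eU hd, JW, Subgroup.mem_zpowers_iff]
  constructor
  · rintro ⟨k, rfl⟩
    exact ⟨_, ⟨k, rfl⟩, fun j => (eU_zpow_weight k j).symm⟩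
  · rintro ⟨_, ⟨k, rfl⟩, hlam⟩
    exact ⟨k, funext fun j => by rw [hlam, eU_zpow_weight]⟩

theorem prod_zpow_eq_zpow_sum {G : Type*} [CommGroup G] (s : Finset ι) (f : ι → ℤ) (a : G) :
    ∏ i ∈ s, a ^ f i = a ^ ∑ i ∈ s, f i := by
  induction s using Finset.cons_induction with
  | empty => simp
  | cons i s hi ih => rw [Finset.prod_cons, Finset.sum_cons, _root_.zpow_add, ih]

variable [Fintype ι] {A : Matrix ι ι ℕ} {w : ι → ℤ} {d : ℤ}

theorem sum_exponent_mul_weight {κ : Type*} {A : Matrix κ ι ℕ} {q : ι → ℚ}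
    (hq : A.map (Nat.cast : ℕ → ℚ) *ᵥ q = 1) (hw : ∀ j, (w j : ℚ) = d * q j) (i : κ) :
    ∑ j, (A i j : ℤ) * w j = d := by
  have hrow : ∑ j, (A i j : ℚ) * q j = 1 := congrFun hq i
  have : ∑ j, (A i j : ℚ) * w j = d := by
    simp only [hw, mul_left_comm _ (d : ℚ), ← Finset.mul_sum, hrow, mul_one]
  exact_mod_cast this

theorem wfun_zpow_weight_mul (hA : ∀ i, ∑ j, (A i j : ℤ) * w j = d) (μ : ℂˣ) (x : ι → ℂ) :
    wfun A (fun j => (μ ^ w j : ℂˣ) * x j) = (μ ^ d : ℂˣ) * wfun A x := by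
  simp only [wfun, Finset.mul_sum, mul_pow, Finset.prod_mul_distrib]
  refine Finset.sum_congr rfl fun i _ => ?_
  have monomial_factor : ∏ j, (μ ^ w j) ^ A i j = μ ^ d := by
    simp only [← hA i, ← prod_zpow_eq_zpow_sum, _root_.zpow_mul', zpow_natCast]
  simp [← monomial_factor]

theorem wfun_one (A : Matrix ι ι ℕ) : wfun A 1 = Fintype.card ι := by
  simp [wfun]

theorem zpow_weight_mem_autP_iff [Nonempty ι] (hA : ∀ i, ∑ j, (A i j : ℤ) * w j = d)
    {μ : ℂˣ} : (fun j => μ ^ w j) ∈ autP (wfun A) ↔ μ ^ d = 1 := by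
  change (∀ x, wfun A (fun j => (μ ^ w j : ℂˣ) * x j) = wfun A x) ↔ _
  simp only [wfun_zpow_weight_mul hA]
  refine ⟨fun h => Units.ext ?_, fun h => by simp [h]⟩
  have hone : wfun A 1 ≠ 0 := by simp [wfun_one]
  exact (mul_eq_right₀ hone).1 (h 1)

end BV

open BV in
theorem delsarte_JW_characterization_general {ι : Type*} [Fintype ι] (A : Matrix ι ι ℕ)
    (q : ι → ℚ) (hq : A.map (Nat.cast : ℕ → ℚ) *ᵥ q = 1) (d : ℕ) (hd : IsDegree q d)
    (w : ι → ℤ) (hw : ∀ j, (w j : ℚ) = d * q j) :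
    (∀ lam ∈ autP (wfun A), (∃ μ : ℂˣ, ∀ j, lam j = μ ^ w j) ↔ lam ∈ JW q)
    ∧ orderOf (jW q) = d
    ∧ Nat.card (JW q) = d := by
  refine ⟨fun lam hlam => ?_, hd.orderOf_jW, (Nat.card_zpowers _).trans hd.orderOf_jW⟩
  rw [mem_JW_iff_exists_pow_eq_one hd.1.1.ne' hw]
  refine ⟨?_, fun ⟨μ, _, hμ⟩ => ⟨μ, hμ⟩⟩
  rintro ⟨μ, hμ⟩
  obtain _ | _ := isEmpty_or_nonempty ι
  · exact ⟨1, one_pow d, isEmptyElim⟩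
  · have hA := sum_exponent_mul_weight (d := d) hq (by simpa using hw)
    obtain rfl : lam = fun j => μ ^ w j := funext hμ
    exact ⟨μ, by simpa using (zpow_weight_mem_autP_iff hA).1 hlam, hμ⟩

/-- for a Delsarte polynomial `W` with invertible exponent matrix, positive
charges `q`, degree `d` and normalized weights `w = d•q` (`gcd(w_1,…,w_n) = 1`), an element
`λ ∈ Aut(W)` acts trivially on `ℙ(w)` (i.e. `λ_j = μ^{w_j}` for some `μ ∈ ℂ*`) iff it belongs
to `J_W = ⟨j_W⟩`; moreover `J_W` is cyclic of order exactly `d`, generated by `j_W`. -/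
theorem delsarte_JW_characterization
    (n : ℕ) (A : Matrix (Fin n) (Fin n) ℕ)
    (hA : IsUnit ((A.map (Nat.cast : ℕ → ℚ)).det))
    (q : Fin n → ℚ) (hq : (A.map (Nat.cast : ℕ → ℚ)) *ᵥ q = 1)
    (hqpos : ∀ j, 0 < q j)
    (d : ℕ) (hd : 0 < d)
    (w : Fin n → ℕ) (hw : ∀ j, (w j : ℚ) = (d : ℚ) * q j)
    (hdmin : ∀ d' : ℕ, 0 < d' → (∀ j, ∃ k : ℤ, (d' : ℚ) * q j = (k : ℚ)) → d ≤ d')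
    (hnorm : Finset.univ.gcd w = 1) :
    (∀ lam ∈ BV.autP (BV.wfun A),
        ((∃ μ : ℂˣ, ∀ j, lam j = μ ^ w j) ↔ lam ∈ BV.JW q))
    ∧ orderOf (BV.jW q) = d
    ∧ Nat.card (BV.JW q) = d := by
  have hdeg : BV.IsDegree q d := ⟨⟨hd, fun j => ⟨w j, mod_cast (hw j).symm⟩⟩,
    fun m hm => hdmin m hm.1 hm.2⟩
  exact_mod_cast delsarte_JW_characterization_general A q hq d hdeg (fun j => w j) hw
end
end

section
/- For W = y_0² + y_1⁵ + y_1y_2⁵ + y_2y_3⁶ (a Delsarte polynomial with weights (25,10,8,7) and degree 50), every diag(a,b,c,d) with a ∈ ℂ^* , b,c,d ∈ ℂ^* satisfying a² = 1, b⁵ = 1, bc⁵ = 1, cd⁶ = 1 and abcd = 1 is a power of j_W = diag(e^{2πi·25/50}, e^{2πi·10/50}, e^{2πi·8/50}, e^{2πi·7/50}); that is, SL(W) = J_W and the quotient S̃L(W) = SL(W)/J_W is trivial. -/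
open Complex BigOperators Matrix

noncomputable section

/-- The exponent matrix of `W = y₀² + y₁⁵ + y₁y₂⁵ + y₂y₃⁶`. -/
def A16 : Matrix (Fin 4) (Fin 4) ℕ :=
  Matrix.of ![![2,0,0,0], ![0,5,0,0], ![0,1,5,0], ![0,0,1,6]]

/-- The charges `q = (25/50, 10/50, 8/50, 7/50)` of `W`. -/
def q16 : Fin 4 → ℚ := ![25/50, 10/50, 8/50, 7/50]

/-!
By independence of characters, a diagonal matrix preserves a Delsarte polynomial with distinct
monomials only if it fixes each monomial. For `W`, the relations `cd⁶ = 1`, `bc⁵ = 1` and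
`abcd = 1` express `a`, `b`, `c` as powers `d⁻²⁵`, `d³⁰`, `d⁻⁶` of the last entry, and then `a² = 1`
becomes `d⁵⁰ = 1`. Thus `SL(W)` embeds into `μ₅₀` through its last entry. Since `7/50` is in lowest
terms, the last entry of `j_W` already generates `μ₅₀`, so `j_W` generates `SL(W)`.
-/

namespace BV

section Monomial

variable {ι M : Type*} [Fintype ι] [CommMonoid M]

/-- The monomial `x ↦ ∏ j, x j ^ a j` with exponent vector `a`, as a character of the monoid
`ι → M`. It is used both over `ℂ`, to write `wfun A` as a sum of characters, and over `ℂˣ`, to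
evaluate the monomials of `wfun A` at a diagonal matrix. -/
def monomialHom (a : ι → ℕ) : (ι → M) →* M :=
  ∏ j, Pi.evalMonoidHom (fun _ => M) j ^ a j

theorem monomialHom_apply (a : ι → ℕ) (x : ι → M) : monomialHom a x = ∏ j, x j ^ a j := by
  simp [monomialHom]

theorem monomialHom_injective {R : Type*} [CommSemiring R] [CharZero R] :
    Function.Injective (monomialHom (ι := ι) (M := R)) := by
  classical
  intro a b hab
  funext j
  have heval (c : ι → ℕ) : monomialHom c (Function.update (1 : ι → R) j 2) = 2 ^ c j := by
    rw [monomialHom_apply, Fintype.prod_eq_single j fun k hk => by simp [hk],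
      Function.update_self]
  have hpow : (2 : R) ^ a j = 2 ^ b j := by rw [← heval a, ← heval b, hab]
  exact Nat.pow_right_injective le_rfl (mod_cast hpow)

end Monomial

section DiagonalSymmetries

variable {ι : Type*} [Fintype ι] {A : Matrix ι ι ℕ}

theorem wfun_eq_sum_monomialHom (x : ι → ℂ) :
    wfun A x = ∑ i, monomialHom (A i) x := by
  simp only [wfun, monomialHom_apply]

theorem wfun_units_mul (lam : ι → ℂˣ) (x : ι → ℂ) :
    wfun A (fun j => lam j * x j) =
      ∑ i, ((monomialHom (A i) lam : ℂˣ) : ℂ) * monomialHom (A i) x := by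
  simp only [wfun, monomialHom_apply, Units.coe_prod, Units.val_pow_eq_pow_val, mul_pow,
    Finset.prod_mul_distrib]

theorem mem_autP_wfun_of_forall_monomialHom_eq_one {lam : ι → ℂˣ}
    (h : ∀ i, monomialHom (A i) lam = 1) : lam ∈ autP (wfun A) := by
  intro x
  rw [wfun_units_mul, wfun_eq_sum_monomialHom]
  simp only [h, Units.val_one, one_mul]

theorem mem_autP_wfun_iff (hA : Function.Injective A.row) {lam : ι → ℂˣ} :
    lam ∈ autP (wfun A) ↔ ∀ i, monomialHom (A i) lam = 1 := by
  refine ⟨fun hlam i => ?_, mem_autP_wfun_of_forall_monomialHom_eq_one⟩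
  -- Dedekind: distinct characters are linearly independent.
  have hindep : LinearIndependent ℂ fun i => (monomialHom (A i) : (ι → ℂ) → ℂ) :=
    (linearIndependent_monoidHom (ι → ℂ) ℂ).comp (fun i => monomialHom (A i))
      (monomialHom_injective.comp hA)
  have hzero :
      ∑ i, (((monomialHom (A i) lam : ℂˣ) : ℂ) - 1) • (monomialHom (A i) : (ι → ℂ) → ℂ) = 0 := by
    funext x
    have hx : wfun A (fun j => lam j * x j) = wfun A x := hlam x
    rw [wfun_units_mul, wfun_eq_sum_monomialHom, ← sub_eq_zero, ← Finset.sum_sub_distrib] at hx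
    simpa only [Finset.sum_apply, Pi.smul_apply, Pi.zero_apply, smul_eq_mul, sub_mul,
      one_mul] using hx
  exact Units.ext (sub_eq_zero.mp (Fintype.linearIndependent_iff.mp hindep _ hzero i))

end DiagonalSymmetries

section Charges

theorem isPrimitiveRoot_eU (v : ℚ) : IsPrimitiveRoot (eU v) v.den :=
  IsPrimitiveRoot.coe_units_iff.mp (Complex.isPrimitiveRoot_exp_rat v)

theorem eU_one : eU 1 = 1 := by
  simpa only [Rat.den_one, pow_one] using (isPrimitiveRoot_eU 1).pow_eq_one

variable {ι : Type*}

theorem monomialHom_jW [Fintype ι] (a : ι → ℕ) (q : ι → ℚ) :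
    monomialHom a (jW q) = eU (∑ j, a j * q j) := by
  ext
  simp only [monomialHom_apply, jW, eU, Units.coe_prod, Units.val_pow_eq_pow_val, Units.val_mk0,
    ← Complex.exp_nat_mul, ← Complex.exp_sum, Rat.cast_sum, Rat.cast_mul, Rat.cast_natCast,
    Finset.mul_sum, mul_left_comm]

theorem prodHom_jW [Fintype ι] (q : ι → ℚ) : prodHom ι (jW q) = eU (∑ j, q j) := by
  simpa [monomialHom_apply, prodHom] using monomialHom_jW 1 q

theorem jW_mem_slP_wfun [Fintype ι] {A : Matrix ι ι ℕ} {q : ι → ℚ}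
    (hcharge : ∀ i, ∑ j, A i j * q j = 1) (hsum : ∑ j, q j = 1) : jW q ∈ slP (wfun A) := by
  refine ⟨mem_autP_wfun_of_forall_monomialHom_eq_one fun i => ?_, ?_⟩
  · rw [monomialHom_jW, hcharge, eU_one]
  · exact MonoidHom.mem_ker.mpr (by rw [prodHom_jW, hsum, eU_one])

theorem eq_JW_of_coord_pow_den_eq_one {H : Subgroup (ι → ℂˣ)} {q : ι → ℚ} (i : ι) (hj : jW q ∈ H)
    (hpow : ∀ lam ∈ H, lam i ^ (q i).den = 1) (hone : ∀ lam ∈ H, lam i = 1 → lam = 1) :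
    H = JW q := by
  refine le_antisymm (fun lam hlam => ?_) (Subgroup.zpowers_le.mpr hj)
  have hroot : lam i ∈ Subgroup.zpowers (eU (q i)) := by
    have : NeZero (q i).den := ⟨(q i).den_nz⟩
    rw [(isPrimitiveRoot_eU (q i)).zpowers_eq]
    exact hpow lam hlam
  obtain ⟨k, hk : eU (q i) ^ k = lam i⟩ := hroot
  have hcoord : (lam / jW q ^ k) i = 1 := by
    rw [Pi.div_apply, Pi.pow_apply, jW, hk, div_self']
  have hlam_eq : lam = jW q ^ k :=
    div_eq_one.mp (hone _ (H.div_mem hlam (H.zpow_mem hj k)) hcoord)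
  exact ⟨k, hlam_eq.symm⟩

end Charges

end BV

theorem eq_zpow_of_chain_relations {G : Type*} [Group G] {a b c d : G}
    (hbc : b * c ^ 5 = 1) (hcd : c * d ^ 6 = 1) (habcd : a * b * c * d = 1) :
    a = d ^ (-25 : ℤ) ∧ b = d ^ (30 : ℤ) ∧ c = d ^ (-6 : ℤ) := by
  have hc : c = d ^ (-6 : ℤ) := by
    rw [eq_inv_of_mul_eq_one_left hcd]
    group
  have hb : b = d ^ (30 : ℤ) := by
    rw [eq_inv_of_mul_eq_one_left hbc, hc]
    group
  have ha : a = d ^ (-25 : ℤ) := by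
    rw [mul_assoc, mul_assoc] at habcd
    rw [eq_inv_of_mul_eq_one_left habcd, hb, hc]
    group
  exact ⟨ha, hb, hc⟩

theorem mem_slP_wfun_A16_iff {lam : Fin 4 → ℂˣ} :
    lam ∈ BV.slP (BV.wfun A16) ↔
      lam 0 ^ 2 = 1 ∧ lam 1 ^ 5 = 1 ∧ lam 1 * lam 2 ^ 5 = 1 ∧ lam 2 * lam 3 ^ 6 = 1 ∧
        lam 0 * lam 1 * lam 2 * lam 3 = 1 := by
  have hrows : Function.Injective A16.row := by decide
  rw [BV.slP, Subgroup.mem_inf, BV.mem_autP_wfun_iff hrows, MonoidHom.mem_ker]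
  simp [BV.monomialHom_apply, BV.prodHom, A16, Fin.forall_fin_succ, Fin.prod_univ_four, and_assoc]

theorem jW_q16_mem_slP : BV.jW q16 ∈ BV.slP (BV.wfun A16) := by
  apply BV.jW_mem_slP_wfun
  · intro i
    fin_cases i <;> norm_num [A16, q16, Fin.sum_univ_succ]
  · norm_num [q16, Fin.sum_univ_succ]

theorem slP_wfun_A16_eq_JW : BV.slP (BV.wfun A16) = BV.JW q16 := by
  have hzpow {lam : Fin 4 → ℂˣ} (hlam : lam ∈ BV.slP (BV.wfun A16)) :
      lam 0 = lam 3 ^ (-25 : ℤ) ∧ lam 1 = lam 3 ^ (30 : ℤ) ∧ lam 2 = lam 3 ^ (-6 : ℤ) := by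
    obtain ⟨-, -, h12, h23, hdet⟩ := mem_slP_wfun_A16_iff.mp hlam
    exact eq_zpow_of_chain_relations h12 h23 hdet
  refine BV.eq_JW_of_coord_pow_den_eq_one 3 jW_q16_mem_slP (fun lam hlam => ?_)
    fun lam hlam h3 => ?_
  · have hden : (q16 3).den = 50 := by
      change (7 / 50 : ℚ).den = 50
      norm_num
    rw [hden]
    calc lam 3 ^ 50 = ((lam 3 ^ (-25 : ℤ)) ^ 2)⁻¹ := by group
      _ = (lam 0 ^ 2)⁻¹ := by rw [(hzpow hlam).1]
      _ = 1 := inv_eq_one.mpr (mem_slP_wfun_A16_iff.mp hlam).1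
  · obtain ⟨h0, h1, h2⟩ := hzpow hlam
    rw [h3, _root_.one_zpow] at h0 h1 h2
    ext j
    fin_cases j <;> simp [h0, h1, h2, h3]

/-- for `W = y₀² + y₁⁵ + y₁y₂⁵ + y₂y₃⁶` (weights `(25,10,8,7)`, degree `50`),
every `diag(a,b,c,d)` with `a² = 1`, `b⁵ = 1`, `bc⁵ = 1`, `cd⁶ = 1`, `abcd = 1` is a power of
`j_W = diag(e^{2πi·25/50}, e^{2πi·10/50}, e^{2πi·8/50}, e^{2πi·7/50})`; that is `SL(W) = J_W`
and `S̃L(W) = SL(W)/J_W` is trivial. -/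
theorem example_K3_transposed :
    (∀ lam : Fin 4 → ℂˣ,
      lam 0 ^ 2 = 1 → lam 1 ^ 5 = 1 → lam 1 * lam 2 ^ 5 = 1 → lam 2 * lam 3 ^ 6 = 1 →
      lam 0 * lam 1 * lam 2 * lam 3 = 1 → lam ∈ Subgroup.zpowers (BV.jW q16))
    ∧ BV.slP (BV.wfun A16) = BV.JW q16
    ∧ Nat.card
        (BV.slP (BV.wfun A16) ⧸ (BV.JW q16).subgroupOf (BV.slP (BV.wfun A16))) = 1 := by
  refine ⟨fun lam h0 h1 h12 h23 hdet => ?_, slP_wfun_A16_eq_JW, ?_⟩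
  · have hlam : lam ∈ BV.slP (BV.wfun A16) :=
      mem_slP_wfun_A16_iff.mpr ⟨h0, h1, h12, h23, hdet⟩
    rwa [slP_wfun_A16_eq_JW] at hlam
  · rw [slP_wfun_A16_eq_JW, Subgroup.subgroupOf_self]
    exact Subgroup.index_top
end
end
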